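/- arXiv:1903.02952 — 3 statements merged into one kernel-verified Lean document; each statement's English description precedes it below -/
import Mathlib

section
/- Let R be a Leibniz conformal algebra with trivial left-center. Then for any flag datum (D_λ, T_λ, Q₀(λ,∂), P(λ,∂)) ∈ FC(R), one has D_{−λ−∂} = −T_λ, i.e. D_{−λ−∂}(a) = −T_λ(a) for all a ∈ R. -/
noncomputable section

/-- `g : ℂ → R` is (the evaluation of) a polynomial in `λ` with coefficients in `R`,
i.e. an element of `R[λ]`. -/
def IsPolyFun {R : Type*} [AddCommGroup R] [Module ℂ R] (g : ℂ → R) : Prop :=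
  ∃ (N : ℕ) (c : ℕ → R), ∀ l : ℂ, g l = ∑ i ∈ Finset.range N, l ^ i • c i

/-- A conformal bilinear map `U × V → W[λ]`, in evaluated form: `f_λ(∂u, v) = -λ f_λ(u,v)`
and `f_λ(u, ∂v) = (∂ + λ) f_λ(u,v)`. -/
structure IsConformalBilin {U V W : Type*}
    [AddCommGroup U] [Module ℂ U] [AddCommGroup V] [Module ℂ V]
    [AddCommGroup W] [Module ℂ W]
    (DU : Module.End ℂ U) (DV : Module.End ℂ V) (DW : Module.End ℂ W)
    (f : ℂ → U → V → W) : Prop where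
  add_left : ∀ (l : ℂ) (a a' : U) (b : V), f l (a + a') b = f l a b + f l a' b
  smul_left : ∀ (l c : ℂ) (a : U) (b : V), f l (c • a) b = c • f l a b
  add_right : ∀ (l : ℂ) (a : U) (b b' : V), f l a (b + b') = f l a b + f l a b'
  smul_right : ∀ (l c : ℂ) (a : U) (b : V), f l a (c • b) = c • f l a b
  poly : ∀ (a : U) (b : V), IsPolyFun (fun l => f l a b)
  conf_left : ∀ (l : ℂ) (a : U) (b : V), f l (DU a) b = (-l) • f l a b
  conf_right : ∀ (l : ℂ) (a : U) (b : V), f l a (DV b) = DW (f l a b) + l • f l a b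

/-- A Leibniz conformal algebra structure on the `ℂ[∂]`-module `(R, D)`:
a conformal bilinear `λ`-bracket satisfying the Jacobi identity. -/
structure IsLeibnizConformal {R : Type*} [AddCommGroup R] [Module ℂ R]
    (D : Module.End ℂ R) (br : ℂ → R → R → R) : Prop where
  bilin : IsConformalBilin D D D br
  jacobi : ∀ (l m : ℂ) (a b c : R),
    br l a (br m b c) = br (l + m) (br l a b) c + br m b (br l a c)

open Polynomial in
/-- The polynomial ring `ℂ[λ, ∂]`, realized as `(ℂ[∂])[λ]`: the *outer* variable is `λ`
and the *inner* variable is `∂`. -/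
abbrev CPoly2 : Type := Polynomial (Polynomial ℂ)

open Polynomial in
/-- Substitute `λ := lam` and `∂ := del` (simultaneously) in `p ∈ ℂ[λ,∂]`; the result is a
polynomial in the remaining formal variable. -/
noncomputable def sub2 (p : CPoly2) (lam del : Polynomial ℂ) : Polynomial ℂ :=
  Polynomial.eval₂ (Polynomial.aeval del).toRingHom lam p

open Polynomial in
/-- Evaluate `p ∈ ℂ[λ,∂]` at `λ := lam`, `∂ := del` with `lam del : ℂ`. -/
noncomputable def ev2 (p : CPoly2) (lam del : ℂ) : ℂ :=
  (p.eval (Polynomial.C lam)).eval del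

open Polynomial in
/-- Substitute `λ := -λ - ∂` in `p ∈ ℂ[λ,∂]` (a formal substitution inside `ℂ[λ,∂]`). -/
noncomputable def twistL (p : CPoly2) : CPoly2 :=
  Polynomial.eval₂ (Polynomial.C : Polynomial ℂ →+* CPoly2)
    (-(Polynomial.X : CPoly2) - Polynomial.C Polynomial.X) p

/-- `IsNegShift D g g'` encodes, for polynomial functions `ℂ → R`, the formal identity
`g'(λ) = g(-λ-∂)`: there are coefficients `c i` of `g` such that
`g' l = ∑ (-l - ∂)^i (c i)`, where `∂` acts via `D`. -/
def IsNegShift {R : Type*} [AddCommGroup R] [Module ℂ R] (D : Module.End ℂ R)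
    (g g' : ℂ → R) : Prop :=
  ∃ (N : ℕ) (c : ℕ → R),
    (∀ l : ℂ, g l = ∑ i ∈ Finset.range N, l ^ i • c i) ∧
    (∀ l : ℂ, g' l = ∑ i ∈ Finset.range N,
      ((((-l) • (1 : Module.End ℂ R) - D)) ^ i) (c i))

open Polynomial

/-- The data of a 4-tuple `(D_λ, T_λ, Q₀(λ,∂), P(λ,∂))` on `R`: `Dm` is a left conformal
linear map, `Tm` is a conformal linear map, `Q₀ ∈ R[λ]` and `P ∈ ℂ[λ,∂]`. -/
structure FCData (R : Type*) [AddCommGroup R] [Module ℂ R] (DR : Module.End ℂ R) where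
  Dm : ℂ → R → R
  Tm : ℂ → R → R
  Q0 : ℂ → R
  P : CPoly2
  Dm_lin : ∀ l : ℂ, IsLinearMap ℂ (Dm l)
  Dm_poly : ∀ a : R, IsPolyFun (fun l => Dm l a)
  Dm_conf : ∀ (l : ℂ) (a : R), Dm l (DR a) = (-l) • Dm l a
  Tm_lin : ∀ l : ℂ, IsLinearMap ℂ (Tm l)
  Tm_poly : ∀ a : R, IsPolyFun (fun l => Tm l a)
  Tm_conf : ∀ (l : ℂ) (a : R), Tm l (DR a) = DR (Tm l a) + l • Tm l a
  Q0_poly : IsPolyFun Q0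

/-- The conditions (fc1)–(fc8) defining the set `FC(R)` of flag datums
`(D_λ, T_λ, Q₀(λ,∂), P(λ,∂))` used for crossed products. -/
def IsFC {R : Type*} [AddCommGroup R] [Module ℂ R] (DR : Module.End ℂ R)
    (br : ℂ → R → R → R) (F : FCData R DR) : Prop :=
  -- (fc1)
  (∀ (l m : ℂ) (a b : R),
    F.Dm (l + m) (br l a b) = br l a (F.Dm m b) - br m b (F.Dm l a)) ∧
  -- (fc2)
  (∀ (l m : ℂ) (a b : R),
    F.Tm m (br l a b) = br l a (F.Tm m b) - br (l + m) (F.Dm l a) b) ∧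
  -- (fc3)
  (∀ (l m : ℂ) (a b : R),
    F.Tm m (br l a b) = br l a (F.Tm m b) + br (l + m) (F.Tm m a) b) ∧
  -- (fc4)
  (∀ (l m : ℂ) (a : R),
    Polynomial.aeval DR (sub2 F.P (Polynomial.C m) (Polynomial.C l + Polynomial.X))
        (F.Dm l a)
      = F.Dm (l + m) (F.Dm l a) + F.Tm m (F.Dm l a) - br l a (F.Q0 m)) ∧
  -- (fc5)
  (∀ (l m : ℂ) (a : R), F.Dm (l + m) (F.Tm m a) + F.Dm (l + m) (F.Dm l a) = 0) ∧
  -- (fc6)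
  (∀ l m : ℂ,
    ev2 F.P l (-l - m) • sub2 F.P (Polynomial.C (l + m)) Polynomial.X
      + sub2 F.P (Polynomial.C l) (Polynomial.C m + Polynomial.X)
          * sub2 F.P (Polynomial.C m) Polynomial.X
      - sub2 F.P (Polynomial.C m) (Polynomial.C l + Polynomial.X)
          * sub2 F.P (Polynomial.C l) Polynomial.X = 0) ∧
  -- (fc7)
  (∀ (l m : ℂ) (a : R),
    ev2 F.P l (-l - m) • F.Tm (l + m) a
      = F.Tm l (F.Tm m a) - br (l + m) (F.Q0 l) a - F.Tm m (F.Tm l a)) ∧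
  -- (fc8)
  (∀ l m : ℂ,
    F.Tm l (F.Q0 m)
      = F.Dm (l + m) (F.Q0 l) + ev2 F.P l (-l - m) • F.Q0 (l + m) + F.Tm m (F.Q0 l)
        + Polynomial.aeval DR
            (sub2 F.P (Polynomial.C l) (Polynomial.C m + Polynomial.X)) (F.Q0 m)
        - Polynomial.aeval DR
            (sub2 F.P (Polynomial.C m) (Polynomial.C l + Polynomial.X)) (F.Q0 l))

/-!
Comparing (fc2) with (fc3) gives `[T_μ(a)_{λ+μ} b] = -[D_λ(a)_{λ+μ} b]`. Inside the left slot of a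
`ν`-bracket `∂` acts as `-ν`, so at `ν = λ + μ` the operator `-μ - ∂` acts as the scalar `λ` and
`D_λ(a)` may be replaced by `D_{-μ-∂}(a)`, which no longer depends on `λ`. Hence
`T_μ(a) + D_{-μ-∂}(a)` lies in the left-center.
-/

theorem IsPolyFun.exists_isNegShift {R : Type*} [AddCommGroup R] [Module ℂ R] {g : ℂ → R}
    (hg : IsPolyFun g) (D : Module.End ℂ R) : ∃ g' : ℂ → R, IsNegShift D g g' := by
  obtain ⟨N, c, hc⟩ := hg
  exact ⟨_, N, c, hc, fun _ => rfl⟩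

namespace IsConformalBilin

variable {U V W : Type*} [AddCommGroup U] [Module ℂ U] [AddCommGroup V] [Module ℂ V]
  [AddCommGroup W] [Module ℂ W] {DU : Module.End ℂ U} {DV : Module.End ℂ V}
  {DW : Module.End ℂ W} {f : ℂ → U → V → W}

/-- A conformal bilinear map at a fixed value of `λ` and a fixed right argument, as a linear map
in its left argument. -/
def leftLinearMap (hf : IsConformalBilin DU DV DW f) (n : ℂ) (b : V) : U →ₗ[ℂ] W where
  toFun a := f n a b
  map_add' a a' := hf.add_left n a a' b
  map_smul' c a := hf.smul_left n c a b

@[simp]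
theorem leftLinearMap_apply (hf : IsConformalBilin DU DV DW f) (n : ℂ) (b : V) (a : U) :
    hf.leftLinearMap n b a = f n a b :=
  rfl

theorem leftLinearMap_neg_smul_one_sub_pow (hf : IsConformalBilin DU DV DW f) (l m : ℂ) (b : V)
    (i : ℕ) (a : U) :
    hf.leftLinearMap (l + m) b ((((-m) • (1 : Module.End ℂ U) - DU) ^ i) a) =
      l ^ i • hf.leftLinearMap (l + m) b a := by
  induction i generalizing a with
  | zero => simp
  | succ i ih =>
    have base : hf.leftLinearMap (l + m) b (((-m) • (1 : Module.End ℂ U) - DU) a) =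
        l • hf.leftLinearMap (l + m) b a := by
      simp only [LinearMap.sub_apply, LinearMap.smul_apply, Module.End.one_apply, map_sub,
        map_smul, leftLinearMap_apply, hf.conf_left]
      module
    rw [pow_succ, Module.End.mul_apply, ih, base, smul_smul, pow_succ]

theorem apply_eq_of_isNegShift (hf : IsConformalBilin DU DV DW f) {g g' : ℂ → U}
    (hg : IsNegShift DU g g') (l m : ℂ) (b : V) : f (l + m) (g' m) b = f (l + m) (g l) b := by
  obtain ⟨N, c, hg, hg'⟩ := hg
  simp only [← hf.leftLinearMap_apply, hg, hg', map_sum, map_smul,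
    leftLinearMap_neg_smul_one_sub_pow]

theorem isNegShift_of_apply_eq (hf : IsConformalBilin DU DV DW f)
    (hcenter : ∀ a : U, (∀ (n : ℂ) (b : V), f n a b = 0) → a = 0) {g g' : ℂ → U}
    (hg : IsPolyFun g) (h : ∀ (l m : ℂ) (b : V), f (l + m) (g' m) b = f (l + m) (g l) b) :
    IsNegShift DU g g' := by
  obtain ⟨s, hs⟩ := hg.exists_isNegShift DU
  suffices g' = s by rwa [this]
  funext m
  refine sub_eq_zero.mp (hcenter _ fun n b => ?_)
  have apply_eq : f n (g' m) b = f n (s m) b := by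
    simpa using (h (n - m) m b).trans (hf.apply_eq_of_isNegShift hs (n - m) m b).symm
  rw [← hf.leftLinearMap_apply, map_sub, leftLinearMap_apply, leftLinearMap_apply, apply_eq,
    sub_self]

end IsConformalBilin

theorem fc_neg_shift_of_trivial_left_center_general
    {R : Type*} [AddCommGroup R] [Module ℂ R] {DR : Module.End ℂ R} {br : ℂ → R → R → R}
    (hbr : IsConformalBilin DR DR DR br)
    (hcenter : ∀ a : R, (∀ (l : ℂ) (b : R), br l a b = 0) → a = 0)
    {Dm Tm : ℂ → R → R} (hDm : ∀ a : R, IsPolyFun (fun l => Dm l a))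
    (fc2 : ∀ (l m : ℂ) (a b : R),
      Tm m (br l a b) = br l a (Tm m b) - br (l + m) (Dm l a) b)
    (fc3 : ∀ (l m : ℂ) (a b : R),
      Tm m (br l a b) = br l a (Tm m b) + br (l + m) (Tm m a) b)
    (a : R) : IsNegShift DR (fun l => Dm l a) (fun l => -(Tm l a)) := by
  refine hbr.isNegShift_of_apply_eq hcenter (hDm a) fun l m b => ?_
  have bracket_Tm : br (l + m) (Tm m a) b = -br (l + m) (Dm l a) b := by
    have := (fc3 l m a b).symm.trans (fc2 l m a b)
    rwa [sub_eq_add_neg, add_right_inj] at this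
  rw [← hbr.leftLinearMap_apply, map_neg, hbr.leftLinearMap_apply, bracket_Tm, neg_neg]

/-- If the Leibniz conformal algebra `R` has trivial left-center, then every
flag datum `(D_λ, T_λ, Q₀, P) ∈ FC(R)` satisfies `D_{-λ-∂} = -T_λ`. -/
theorem fc_neg_shift_of_trivial_left_center
    {R : Type*} [AddCommGroup R] [Module ℂ R] (DR : Module.End ℂ R)
    (br : ℂ → R → R → R) (hLeib : IsLeibnizConformal DR br)
    (hcenter : ∀ a : R, (∀ (l : ℂ) (b : R), br l a b = 0) → a = 0)
    (F : FCData R DR) (hF : IsFC DR br F) :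
    ∀ a : R, IsNegShift DR (fun l => F.Dm l a) (fun l => -(F.Tm l a)) :=
  fc_neg_shift_of_trivial_left_center_general hLeib.bilin hcenter F.Dm_poly hF.2.1 hF.2.2.1
end
end

section
/- Let R = ℂ[∂]V be a Leibniz conformal algebra with trivial left-center and Q = ℂ[∂]x a free ℂ[∂]-module of rank 1. Then two flag datums (D_λ, T_λ, Q₀(λ,∂), P(λ,∂)) and (D'_λ, T'_λ, Q₀'(λ,∂), P'(λ,∂)) in FC(R) are equivalent (≡) if and only if there exist u₀ ∈ R and β ∈ ℂ∖{0} such that T_λ(a) = [u₀ _λ a] + βT'_λ(a) for all a ∈ R, P(λ,∂) = βP'(λ,∂), and [a_λ u₀] = −[u₀ _{−λ−∂} a] for all a ∈ R. Moreover, they are cohomologous (≈) if and only if there exists u₀ ∈ R such that these conditions hold with β = 1. -/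
noncomputable section

open Polynomial

/-- The flag datum `(D,T,Q₀,P)` is obtained from `(D',T',Q₀',P')` via the pair
`(u₀, β)` — the equivalence relation on `FC(R)` for crossed products. -/
def FCEquivVia {R : Type*} [AddCommGroup R] [Module ℂ R] (DR : Module.End ℂ R)
    (br : ℂ → R → R → R) (F F' : FCData R DR) (u₀ : R) (β : ℂ) : Prop :=
  (∀ (l : ℂ) (a : R), F.Dm l a = br l a u₀ + β • F'.Dm l a) ∧
  (∀ (l : ℂ) (a : R), F.Tm l a = br l u₀ a + β • F'.Tm l a) ∧
  (F.P = β • F'.P) ∧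
  (∀ l : ℂ, F.Q0 l
      = br l u₀ u₀ + β • F'.Dm l u₀ + β • F'.Tm l u₀ + β ^ 2 • F'.Q0 l
        - Polynomial.aeval DR (sub2 F.P (Polynomial.C l) Polynomial.X) u₀)

/-!
By (fc2) and (fc3), `[D_λ(a)_{λ+μ} b] = -[T_μ(a)_{λ+μ} b]`, and by (fc7), `[Q₀(λ)_{λ+μ} b]` is
expressed through `T` and `P`. When the left-center is trivial, an element is determined by its
left brackets, so `D` and `Q₀` are determined by `T` and `P`. Given the relations between `T, T'`
and `P, P'`, the relation for `D` therefore becomes a condition on `u₀` alone, namely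
`[a_λ u₀] = -[u₀_{-λ-∂} a]`, and the relation for `Q₀` becomes automatic.
-/

/-- The form `f_λ` has trivial left-center: only `a = 0` satisfies `f_λ(a, b) = 0` for all `b`.
It is stated for a form `U × V → W[λ]` with values in any third module; for a `λ`-bracket it is
the triviality of the left-center of the algebra. -/
def HasTrivialLeftCenter {U V W : Type*} [Zero U] [Zero W] (f : ℂ → U → V → W) : Prop :=
  ∀ a : U, (∀ (l : ℂ) (b : V), f l a b = 0) → a = 0

namespace IsConformalBilin

variable {U V W : Type*} [AddCommGroup U] [Module ℂ U] [AddCommGroup V] [Module ℂ V]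
  [AddCommGroup W] [Module ℂ W] {DU : Module.End ℂ U} {DV : Module.End ℂ V}
  {DW : Module.End ℂ W} {f : ℂ → U → V → W}

theorem isLinearMap_left (hf : IsConformalBilin DU DV DW f) (l : ℂ) (b : V) :
    IsLinearMap ℂ (fun a => f l a b) where
  map_add a a' := hf.add_left l a a' b
  map_smul c a := hf.smul_left l c a b

theorem neg_left (hf : IsConformalBilin DU DV DW f) (l : ℂ) (a : U) (b : V) :
    f l (-a) b = -f l a b :=
  (hf.isLinearMap_left l b).map_neg a

theorem sub_left (hf : IsConformalBilin DU DV DW f) (l : ℂ) (a a' : U) (b : V) :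
    f l (a - a') b = f l a b - f l a' b :=
  (hf.isLinearMap_left l b).map_sub a a'

theorem sum_left (hf : IsConformalBilin DU DV DW f) {ι : Type*} (s : Finset ι) (l : ℂ)
    (a : ι → U) (b : V) : f l (∑ i ∈ s, a i) b = ∑ i ∈ s, f l (a i) b :=
  map_sum ((hf.isLinearMap_left l b).mk' _) a s

theorem aeval_left (hf : IsConformalBilin DU DV DW f) (l : ℂ) (p : ℂ[X]) (a : U) (b : V) :
    f l (aeval DU p a) b = p.eval (-l) • f l a b := by
  induction p using Polynomial.induction_on generalizing a with
  | C c => simp [Module.algebraMap_end_apply, hf.smul_left]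
  | add p q hp hq =>
    rw [map_add, LinearMap.add_apply, hf.add_left, hp, hq, eval_add, add_smul]
  | monomial k c ih =>
    rw [pow_succ, ← mul_assoc, map_mul, Module.End.mul_apply, ih, aeval_X, hf.conf_left,
      smul_smul, eval_mul_X]

theorem negShift_pow_left (hf : IsConformalBilin DU DV DW f) (l n : ℂ) (i : ℕ) (a : U) (b : V) :
    f n ((((-l) • (1 : Module.End ℂ U) - DU) ^ i) a) b = (n - l) ^ i • f n a b := by
  have pow_eq_aeval :
      ((-l) • (1 : Module.End ℂ U) - DU) ^ i = aeval DU ((C (-l) - X) ^ i : ℂ[X]) := by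
    rw [map_pow, map_sub, aeval_X, aeval_C, Algebra.algebraMap_eq_smul_one]
  rw [pow_eq_aeval, hf.aeval_left, eval_pow, eval_sub, eval_C, eval_X, sub_neg_eq_add,
    neg_add_eq_sub]

theorem sum_negShift_pow_left (hf : IsConformalBilin DU DV DW f) (N : ℕ) (c : ℕ → U) (l n : ℂ)
    (b : V) :
    f n (∑ i ∈ Finset.range N, (((-l) • (1 : Module.End ℂ U) - DU) ^ i) (c i)) b =
      f n (∑ i ∈ Finset.range N, (n - l) ^ i • c i) b := by
  simp only [hf.sum_left, hf.negShift_pow_left, hf.smul_left]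

theorem eq_iff_of_hasTrivialLeftCenter (hf : IsConformalBilin DU DV DW f)
    (hcenter : HasTrivialLeftCenter f) {a a' : U} :
    a = a' ↔ ∀ (n : ℂ) (b : V), f n a b = f n a' b := by
  refine ⟨fun h _ _ => by rw [h], fun h => sub_eq_zero.mp (hcenter _ fun n b => ?_)⟩
  rw [hf.sub_left, h, sub_self]

-- Under `f_n(·, b)` the operator `∂` acts as `-n`, so `-l - ∂` acts as the scalar `n - l`.
theorem isNegShift_iff (hf : IsConformalBilin DU DV DW f) (hcenter : HasTrivialLeftCenter f)
    {g g' : ℂ → U} (hg : IsPolyFun g) :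
    IsNegShift DU g g' ↔ ∀ (l n : ℂ) (b : V), f n (g' l) b = f n (g (n - l)) b := by
  constructor
  · rintro ⟨N, c, g_eq, g'_eq⟩ l n b
    rw [g_eq, g'_eq, hf.sum_negShift_pow_left]
  · intro h
    obtain ⟨N, c, g_eq⟩ := hg
    refine ⟨N, c, g_eq, fun l => (hf.eq_iff_of_hasTrivialLeftCenter hcenter).mpr fun n b => ?_⟩
    rw [h, g_eq, hf.sum_negShift_pow_left]

end IsConformalBilin

theorem eval_sub2_C_X (p : CPoly2) (l d : ℂ) : (sub2 p (C l) X).eval d = ev2 p l d := by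
  have aeval_X_eq_id : (aeval (X : ℂ[X])).toRingHom = RingHom.id ℂ[X] := by
    ext <;> simp
  rw [sub2, ev2, aeval_X_eq_id, eval₂_id]

theorem ev2_smul (p : CPoly2) (c l d : ℂ) : ev2 (c • p) l d = c * ev2 p l d := by
  simp only [ev2, eval_smul, smul_eq_mul]

section FlagDatum

variable {R : Type*} [AddCommGroup R] [Module ℂ R] {DR : Module.End ℂ R} {br : ℂ → R → R → R}
  {F F' : FCData R DR}

namespace IsFC

theorem bracket_Dm (hF : IsFC DR br F) (l m : ℂ) (a b : R) :
    br (l + m) (F.Dm l a) b = br l a (F.Tm m b) - F.Tm m (br l a b) := by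
  obtain ⟨-, fc2, -⟩ := hF
  rw [fc2, sub_sub_cancel]

theorem bracket_Tm (hF : IsFC DR br F) (l m : ℂ) (a b : R) :
    br (l + m) (F.Tm m a) b = F.Tm m (br l a b) - br l a (F.Tm m b) := by
  obtain ⟨-, -, fc3, -⟩ := hF
  rw [fc3, add_sub_cancel_left]

theorem bracket_Q0 (hF : IsFC DR br F) (l m : ℂ) (b : R) :
    br (l + m) (F.Q0 l) b =
      F.Tm l (F.Tm m b) - F.Tm m (F.Tm l b) - ev2 F.P l (-l - m) • F.Tm (l + m) b := by
  obtain ⟨-, -, -, -, -, -, fc7, -⟩ := hF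
  rw [fc7]
  abel

theorem bracket_Dm_eq_neg_bracket_Tm (hF : IsFC DR br F) (l n : ℂ) (a b : R) :
    br n (F.Dm l a) b = -br n (F.Tm (n - l) a) b := by
  have h := (hF.bracket_Dm l (n - l) a b).trans (neg_sub _ _).symm
  rwa [← hF.bracket_Tm, add_sub_cancel] at h

end IsFC

theorem Dm_eq_iff_isNegShift (hbr : IsConformalBilin DR DR DR br)
    (hcenter : HasTrivialLeftCenter br) (hF : IsFC DR br F) (hF' : IsFC DR br F') {u₀ a : R}
    {β : ℂ} (hT : ∀ l, F.Tm l a = br l u₀ a + β • F'.Tm l a) :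
    (∀ l, F.Dm l a = br l a u₀ + β • F'.Dm l a) ↔
      IsNegShift DR (fun l => br l u₀ a) (fun l => -br l a u₀) := by
  rw [hbr.isNegShift_iff hcenter (hbr.poly u₀ a)]
  refine forall_congr' fun l => (hbr.eq_iff_of_hasTrivialLeftCenter hcenter).trans <|
    forall₂_congr fun n b => ?_
  rw [hbr.add_left, hbr.smul_left, hF.bracket_Dm_eq_neg_bracket_Tm,
    hF'.bracket_Dm_eq_neg_bracket_Tm, hT, hbr.add_left, hbr.smul_left, hbr.neg_left, smul_neg,
    neg_add, add_left_inj, eq_comm, neg_eq_iff_eq_neg]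

theorem Tm_commutator_of_Tm_eq (hLeib : IsLeibnizConformal DR br) (hF' : IsFC DR br F') {u₀ : R}
    {β : ℂ} (hT : ∀ (l : ℂ) (a : R), F.Tm l a = br l u₀ a + β • F'.Tm l a) (l m : ℂ) (b : R) :
    F.Tm l (F.Tm m b) - F.Tm m (F.Tm l b) =
      br (l + m) (br l u₀ u₀) b + β • br (l + m) (F'.Dm l u₀) b
        + β • br (l + m) (F'.Tm l u₀) b
        + β ^ 2 • (F'.Tm l (F'.Tm m b) - F'.Tm m (F'.Tm l b)) := by
  have bracket_bracket :
      br (l + m) (br l u₀ u₀) b = br l u₀ (br m u₀ b) - br m u₀ (br l u₀ b) :=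
    eq_sub_of_add_eq (hLeib.jacobi l m u₀ u₀ b).symm
  have bracket_Tm :
      br (l + m) (F'.Tm l u₀) b = F'.Tm l (br m u₀ b) - br m u₀ (F'.Tm l b) := by
    rw [add_comm, hF'.bracket_Tm]
  rw [bracket_bracket, bracket_Tm, hF'.bracket_Dm]
  simp only [hT, hLeib.bilin.add_right, hLeib.bilin.smul_right, (F'.Tm_lin _).map_add,
    (F'.Tm_lin _).map_smul]
  module

theorem Q0_eq_of_Tm_eq (hLeib : IsLeibnizConformal DR br) (hcenter : HasTrivialLeftCenter br)
    (hF : IsFC DR br F) (hF' : IsFC DR br F') {u₀ : R} {β : ℂ}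
    (hT : ∀ (l : ℂ) (a : R), F.Tm l a = br l u₀ a + β • F'.Tm l a) (hP : F.P = β • F'.P)
    (l : ℂ) :
    F.Q0 l = br l u₀ u₀ + β • F'.Dm l u₀ + β • F'.Tm l u₀ + β ^ 2 • F'.Q0 l
      - aeval DR (sub2 F.P (C l) X) u₀ := by
  refine (hLeib.bilin.eq_iff_of_hasTrivialLeftCenter hcenter).mpr fun n b => ?_
  obtain ⟨m, rfl⟩ : ∃ m, n = l + m := ⟨n - l, (add_sub_cancel l n).symm⟩
  have ev2_P : ev2 F.P l (-l - m) = β * ev2 F'.P l (-l - m) := by rw [hP, ev2_smul]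
  have bracket_P_u₀ : br (l + m) (aeval DR (sub2 F.P (C l) X) u₀) b =
      ev2 F.P l (-l - m) • br (l + m) u₀ b := by
    rw [hLeib.bilin.aeval_left, eval_sub2_C_X, neg_add']
  rw [hF.bracket_Q0, Tm_commutator_of_Tm_eq hLeib hF' hT, hT, hLeib.bilin.sub_left, bracket_P_u₀,
    ev2_P]
  simp only [hLeib.bilin.add_left, hLeib.bilin.smul_left, hF'.bracket_Q0]
  module

theorem fc_equiv_iff_of_trivial_left_center_general (hLeib : IsLeibnizConformal DR br)
    (hcenter : HasTrivialLeftCenter br) (hF : IsFC DR br F) (hF' : IsFC DR br F') {u₀ : R}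
    {β : ℂ} :
    FCEquivVia DR br F F' u₀ β ↔
      (∀ (l : ℂ) (a : R), F.Tm l a = br l u₀ a + β • F'.Tm l a) ∧
      F.P = β • F'.P ∧
      ∀ a : R, IsNegShift DR (fun l => br l u₀ a) (fun l => -br l a u₀) := by
  have Dm_iff (hT : ∀ (l : ℂ) (a : R), F.Tm l a = br l u₀ a + β • F'.Tm l a) (a : R) :=
    Dm_eq_iff_isNegShift hLeib.bilin hcenter hF hF' (hT · a)
  constructor
  · rintro ⟨hD, hT, hP, -⟩
    exact ⟨hT, hP, fun a => (Dm_iff hT a).mp (hD · a)⟩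
  · rintro ⟨hT, hP, hShift⟩
    exact ⟨fun l a => (Dm_iff hT a).mpr (hShift a) l, hT, hP,
      Q0_eq_of_Tm_eq hLeib hcenter hF hF' hT hP⟩

end FlagDatum

/-- Let `R = ℂ[∂]V` be a Leibniz conformal algebra with trivial left-center
and `Q = ℂ[∂]x` free of rank one.  Two flag datums in `FC(R)` are equivalent iff there
exist `u₀ ∈ R` and `β ≠ 0` with `T_λ(a) = [u₀_λ a] + β T'_λ(a)`, `P = β P'` and
`[a_λ u₀] = -[u₀_{-λ-∂} a]`; they are cohomologous iff this holds with `β = 1`. -/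
theorem fc_equiv_iff_of_trivial_left_center
    {R Q : Type*} [AddCommGroup R] [Module ℂ R] [AddCommGroup Q] [Module ℂ Q]
    (DR : Module.End ℂ R) (DQ : Module.End ℂ Q)
    (br : ℂ → R → R → R) (hLeib : IsLeibnizConformal DR br)
    (hcenter : ∀ a : R, (∀ (l : ℂ) (b : R), br l a b = 0) → a = 0)
    (ι : Type*) (v : ι → R)
    (hRfree : ∀ a : R, ∃! c : ι →₀ Polynomial ℂ,
      (c.sum fun i p => Polynomial.aeval DR p (v i)) = a)
    (x : Q) (hQfree : ∀ q : Q, ∃! p : Polynomial ℂ, Polynomial.aeval DQ p x = q)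
    (F F' : FCData R DR) (hF : IsFC DR br F) (hF' : IsFC DR br F') :
    ((∃ (u₀ : R) (β : ℂ), β ≠ 0 ∧ FCEquivVia DR br F F' u₀ β) ↔
      (∃ (u₀ : R) (β : ℂ), β ≠ 0 ∧
        (∀ (l : ℂ) (a : R), F.Tm l a = br l u₀ a + β • F'.Tm l a) ∧
        F.P = β • F'.P ∧
        (∀ a : R, IsNegShift DR (fun l => br l u₀ a) (fun l => -(br l a u₀))))) ∧
    ((∃ u₀ : R, FCEquivVia DR br F F' u₀ 1) ↔
      (∃ u₀ : R,
        (∀ (l : ℂ) (a : R), F.Tm l a = br l u₀ a + F'.Tm l a) ∧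
        F.P = F'.P ∧
        (∀ a : R, IsNegShift DR (fun l => br l u₀ a) (fun l => -(br l a u₀))))) := by
  simp only [fc_equiv_iff_of_trivial_left_center_general hLeib hcenter hF hF', one_smul, and_self]
end
end

section
/- Let R and Q be two Leibniz conformal algebras and set E = R ⊕ Q (direct sum of ℂ[∂]-modules). Suppose E carries a Leibniz conformal algebra structure such that both R and Q are subalgebras of E. Then E is isomorphic, via an isomorphism stabilizing R and co-stabilizing Q, to a bicrossed product R♮^{◁,▷}_{↼,⇀} Q. -/
noncomputable section

/-- An extending datum `Ω(R,Q) = (↼, ⇀, ◁, ▷, f, {·_λ·})` of a Leibniz conformal algebra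
`R` by a `ℂ[∂]`-module `Q`: six conformal bilinear maps.  Here `lh = ↼`, `rh = ⇀`,
`lt = ◁`, `rt = ▷`, `fm = f`, `bq = {·_λ·}`. -/
structure IsExtendingDatum {R Q : Type*}
    [AddCommGroup R] [Module ℂ R] [AddCommGroup Q] [Module ℂ Q]
    (DR : Module.End ℂ R) (DQ : Module.End ℂ Q)
    (lh : ℂ → R → Q → R) (rh : ℂ → R → Q → Q)
    (lt : ℂ → Q → R → Q) (rt : ℂ → Q → R → R)
    (fm : ℂ → Q → Q → R) (bq : ℂ → Q → Q → Q) : Prop where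
  lh_bilin : IsConformalBilin DR DQ DR lh
  rh_bilin : IsConformalBilin DR DQ DQ rh
  lt_bilin : IsConformalBilin DQ DR DQ lt
  rt_bilin : IsConformalBilin DQ DR DR rt
  fm_bilin : IsConformalBilin DQ DQ DR fm
  bq_bilin : IsConformalBilin DQ DQ DQ bq

/-- The unified product bracket on `R × Q`:
`[(a,x)_λ (b,y)] = ([a_λ b] + a↼_λ y + x▷_λ b + f_λ(x,y), a⇀_λ y + x◁_λ b + {x_λ y})`. -/
def unifiedBracket {R Q : Type*}
    [AddCommGroup R] [Module ℂ R] [AddCommGroup Q] [Module ℂ Q]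
    (br : ℂ → R → R → R)
    (lh : ℂ → R → Q → R) (rh : ℂ → R → Q → Q)
    (lt : ℂ → Q → R → Q) (rt : ℂ → Q → R → R)
    (fm : ℂ → Q → Q → R) (bq : ℂ → Q → Q → Q) :
    ℂ → R × Q → R × Q → R × Q :=
  fun l p q =>
    (br l p.1 q.1 + lh l p.1 q.2 + rt l p.2 q.1 + fm l p.2 q.2,
     rh l p.1 q.2 + lt l p.2 q.1 + bq l p.2 q.2)

/-- A module `(M, lact, ract)` over a Leibniz conformal algebra `(L, DL, brL)`:
two conformal bilinear actions satisfying the three module axioms. -/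
structure IsLCModule {L M : Type*}
    [AddCommGroup L] [Module ℂ L] [AddCommGroup M] [Module ℂ M]
    (DL : Module.End ℂ L) (DM : Module.End ℂ M)
    (brL : ℂ → L → L → L) (lact : ℂ → L → M → M) (ract : ℂ → M → L → M) : Prop where
  lact_bilin : IsConformalBilin DL DM DM lact
  ract_bilin : IsConformalBilin DM DL DM ract
  ax1 : ∀ (l m : ℂ) (a b : L) (x : M),
    lact l a (lact m b x) = lact (l + m) (brL l a b) x + lact m b (lact l a x)
  ax2 : ∀ (l m : ℂ) (a b : L) (x : M),
    lact l a (ract m x b) = ract (l + m) (lact l a x) b + ract m x (brL l a b)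
  ax3 : ∀ (l m : ℂ) (a b : L) (x : M),
    ract l x (brL m a b) = ract (l + m) (ract l x a) b + lact m a (ract l x b)

/-!
The action of a subalgebra `L` of `E` on `E` by the bracket, on either side, preserves `L`, so it
descends to the quotient `E / L`, and the Jacobi identity of `E` becomes the module axioms there.
In `E = R ⊕ Q` each summand is a subalgebra and is the quotient of `E` by the other one. The four
actions of the bicrossed product are the components of the mixed brackets of `E`, and bilinearity
recovers the bracket of `E` from them: the isomorphism is the identity.
-/

section BracketComponent

variable {U V W U' V' W' : Type*}
  [AddCommGroup U] [Module ℂ U] [AddCommGroup V] [Module ℂ V] [AddCommGroup W] [Module ℂ W]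
  [AddCommGroup U'] [Module ℂ U'] [AddCommGroup V'] [Module ℂ V'] [AddCommGroup W'] [Module ℂ W']

theorem IsPolyFun.map {g : ℂ → V} (hg : IsPolyFun g) (p : V →ₗ[ℂ] W) :
    IsPolyFun fun l => p (g l) := by
  obtain ⟨N, c, hc⟩ := hg
  exact ⟨N, fun k => p (c k), fun l => by simp only [hc, map_sum, map_smul]⟩

/-- The component of a `λ`-product `f` obtained by restricting its arguments along `i` and `j` and
projecting its value along `p`. For `f` the bracket of `E = R × Q`, with `i`, `j` the inclusions and
`p` a projection of `E`, these are the maps `↼`, `⇀`, `◁`, `▷` of the bicrossed product. -/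
def bracketComponent (f : ℂ → U → V → W) (i : U' →ₗ[ℂ] U) (j : V' →ₗ[ℂ] V) (p : W →ₗ[ℂ] W') :
    ℂ → U' → V' → W' :=
  fun l u v => p (f l (i u) (j v))

protected theorem IsConformalBilin.bracketComponent
    {DU : Module.End ℂ U} {DV : Module.End ℂ V} {DW : Module.End ℂ W}
    {DU' : Module.End ℂ U'} {DV' : Module.End ℂ V'} {DW' : Module.End ℂ W'}
    {f : ℂ → U → V → W} {i : U' →ₗ[ℂ] U} {j : V' →ₗ[ℂ] V} {p : W →ₗ[ℂ] W'}
    (hf : IsConformalBilin DU DV DW f) (hi : Function.Semiconj i DU' DU)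
    (hj : Function.Semiconj j DV' DV) (hp : Function.Semiconj p DW DW') :
    IsConformalBilin DU' DV' DW' (bracketComponent f i j p) where
  add_left l a a' b := by simp only [bracketComponent, map_add, hf.add_left]
  smul_left l c a b := by simp only [bracketComponent, map_smul, hf.smul_left]
  add_right l a b b' := by simp only [bracketComponent, map_add, hf.add_right]
  smul_right l c a b := by simp only [bracketComponent, map_smul, hf.smul_right]
  poly a b := (hf.poly (i a) (j b)).map p
  conf_left l a b := by simp only [bracketComponent, hi.eq, hf.conf_left, map_smul]
  conf_right l a b := by
    simp only [bracketComponent, hj.eq, hf.conf_right, map_add, map_smul, hp.eq]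

end BracketComponent

theorem exists_section_add_eq_of_exact {A B C F : Type*} [AddGroup B] [AddGroup C]
    [FunLike F B C] [AddMonoidHomClass F B C] {i : A → B} {j : C → B} {p : F}
    (hip : Function.Exact i p) (hpj : Function.LeftInverse p j) (b : B) :
    ∃ a : A, j (p b) + i a = b := by
  have hker : p (-j (p b) + b) = 0 := by rw [map_add, map_neg, hpj, neg_add_cancel]
  obtain ⟨a, ha⟩ := (hip _).mp hker
  exact ⟨a, by rw [ha, add_neg_cancel_left]⟩

section QuotientModule

variable {L M E : Type*}
  [AddCommGroup L] [Module ℂ L] [AddCommGroup M] [Module ℂ M] [AddCommGroup E] [Module ℂ E]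
  {DL : Module.End ℂ L} {DM : Module.End ℂ M} {DE : Module.End ℂ E}
  {brL : ℂ → L → L → L} {brE : ℂ → E → E → E}
  {i : L →ₗ[ℂ] E} {j : M →ₗ[ℂ] E} {p : E →ₗ[ℂ] M}

theorem IsConformalBilin.proj_apply_section_proj_right (hE : IsConformalBilin DE DE DE brE)
    (hip : Function.Exact i p) (hpj : Function.LeftInverse p j)
    (hbr : ∀ l a b, brE l (i a) (i b) = i (brL l a b)) (l : ℂ) (a : L) (e : E) :
    p (brE l (i a) (j (p e))) = p (brE l (i a) e) := by
  obtain ⟨c, hc⟩ := exists_section_add_eq_of_exact hip hpj e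
  nth_rw 2 [← hc]
  rw [hE.add_right, hbr, map_add, hip.apply_apply_eq_zero, add_zero]

theorem IsConformalBilin.proj_apply_section_proj_left (hE : IsConformalBilin DE DE DE brE)
    (hip : Function.Exact i p) (hpj : Function.LeftInverse p j)
    (hbr : ∀ l a b, brE l (i a) (i b) = i (brL l a b)) (l : ℂ) (e : E) (a : L) :
    p (brE l (j (p e)) (i a)) = p (brE l e (i a)) := by
  obtain ⟨c, hc⟩ := exists_section_add_eq_of_exact hip hpj e
  nth_rw 2 [← hc]
  rw [hE.add_left, hbr, map_add, hip.apply_apply_eq_zero, add_zero]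

theorem IsLeibnizConformal.isLCModule_of_exact (hE : IsLeibnizConformal DE brE)
    (hi : Function.Semiconj i DL DE) (hj : Function.Semiconj j DM DE)
    (hp : Function.Semiconj p DE DM)
    (hip : Function.Exact i p) (hpj : Function.LeftInverse p j)
    (hbr : ∀ l a b, brE l (i a) (i b) = i (brL l a b)) :
    IsLCModule DL DM brL (bracketComponent brE i j p) (bracketComponent brE j i p) := by
  have hright := hE.bilin.proj_apply_section_proj_right hip hpj hbr
  have hleft := hE.bilin.proj_apply_section_proj_left hip hpj hbr
  exact
    { lact_bilin := hE.bilin.bracketComponent hi hj hp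
      ract_bilin := hE.bilin.bracketComponent hj hi hp
      ax1 := fun l m a b x => by
        simp only [bracketComponent, hright]
        rw [hE.jacobi, map_add, hbr]
      ax2 := fun l m a b x => by
        simp only [bracketComponent, hright, hleft]
        rw [hE.jacobi, map_add, hbr]
      ax3 := fun l m a b x => by
        simp only [bracketComponent, hright, hleft]
        rw [← hbr, hE.jacobi, map_add] }

end QuotientModule

theorem IsConformalBilin.unifiedBracket_bracketComponent
    {R Q : Type*} [AddCommGroup R] [Module ℂ R] [AddCommGroup Q] [Module ℂ Q]
    {DE : Module.End ℂ (R × Q)} {brE : ℂ → R × Q → R × Q → R × Q}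
    (hE : IsConformalBilin DE DE DE brE)
    {br : ℂ → R → R → R} {fm : ℂ → Q → Q → R} {bq : ℂ → Q → Q → Q}
    (hR : ∀ l a b, brE l (a, 0) (b, 0) = (br l a b, 0))
    (hQ : ∀ l x y, brE l (0, x) (0, y) = (fm l x y, bq l x y)) :
    unifiedBracket br
      (bracketComponent brE (.inl ℂ R Q) (.inr ℂ R Q) (.fst ℂ R Q))
      (bracketComponent brE (.inl ℂ R Q) (.inr ℂ R Q) (.snd ℂ R Q))
      (bracketComponent brE (.inr ℂ R Q) (.inl ℂ R Q) (.snd ℂ R Q))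
      (bracketComponent brE (.inr ℂ R Q) (.inl ℂ R Q) (.fst ℂ R Q)) fm bq = brE := by
  funext l ⟨a, x⟩ ⟨b, y⟩
  have hexpand : brE l (a, x) (b, y) =
      (br l a b, 0) + brE l (a, 0) (0, y) + brE l (0, x) (b, 0) + (fm l x y, bq l x y) := by
    rw [← Prod.fst_add_snd (a, x), ← Prod.fst_add_snd (b, y)]
    simp only [hE.add_left, hE.add_right, hR, hQ]
    abel
  rw [hexpand]
  ext <;> simp [unifiedBracket, bracketComponent]

/-- If `E = R ⊕ Q` is a Leibniz conformal algebra such that both `R` and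
`Q` are subalgebras of `E`, then `E` is isomorphic (via an isomorphism stabilizing `R`
and co-stabilizing `Q`, here the identity) to a bicrossed product
`R ♮^{◁,▷}_{↼,⇀} Q`. -/
theorem isomorphic_to_bicrossed_product_of_subalgebras
    {R Q : Type*} [AddCommGroup R] [Module ℂ R] [AddCommGroup Q] [Module ℂ Q]
    (DR : Module.End ℂ R) (DQ : Module.End ℂ Q)
    (br : ℂ → R → R → R) (hLeibR : IsLeibnizConformal DR br)
    (bq : ℂ → Q → Q → Q) (hLeibQ : IsLeibnizConformal DQ bq)
    (brE : ℂ → R × Q → R × Q → R × Q)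
    (hE : IsLeibnizConformal (LinearMap.prodMap DR DQ) brE)
    (hsubR : ∀ (l : ℂ) (a b : R), brE l (a, 0) (b, 0) = (br l a b, 0))
    (hsubQ : ∀ (l : ℂ) (x y : Q), brE l (0, x) (0, y) = (0, bq l x y)) :
    ∃ (lh : ℂ → R → Q → R) (rh : ℂ → R → Q → Q)
      (lt : ℂ → Q → R → Q) (rt : ℂ → Q → R → R),
      IsConformalBilin DR DQ DR lh ∧ IsConformalBilin DR DQ DQ rh ∧
      IsConformalBilin DQ DR DQ lt ∧ IsConformalBilin DQ DR DR rt ∧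
      IsLCModule DR DQ br rh lt ∧
      IsLCModule DQ DR bq rt lh ∧
      IsLeibnizConformal (LinearMap.prodMap DR DQ)
        (unifiedBracket br lh rh lt rt (fun _ _ _ => 0) bq) ∧
      ∀ (l : ℂ) (u v : R × Q),
        unifiedBracket br lh rh lt rt (fun _ _ _ => 0) bq l u v = brE l u v := by
  have hinl : Function.Semiconj (LinearMap.inl ℂ R Q) DR (DR.prodMap DQ) := fun a => by simp
  have hinr : Function.Semiconj (LinearMap.inr ℂ R Q) DQ (DR.prodMap DQ) := fun x => by simp
  have hfst : Function.Semiconj (LinearMap.fst ℂ R Q) (DR.prodMap DQ) DR := fun _ => rfl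
  have hsnd : Function.Semiconj (LinearMap.snd ℂ R Q) (DR.prodMap DQ) DQ := fun _ => rfl
  have hmoduleQ := hE.isLCModule_of_exact hinl hinr hsnd .inl_snd (fun _ => rfl) hsubR
  have hmoduleR := hE.isLCModule_of_exact hinr hinl hfst .inr_fst (fun _ => rfl) hsubQ
  have hbracket := hE.bilin.unifiedBracket_bracketComponent hsubR hsubQ
  exact ⟨_, _, _, _, hmoduleR.ract_bilin, hmoduleQ.lact_bilin, hmoduleQ.ract_bilin,
    hmoduleR.lact_bilin, hmoduleQ, hmoduleR, by rwa [hbracket], fun l u v => by rw [hbracket]⟩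
end
end
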